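/- Let n ≥ 2 and m ≥ 1 be integers and R > 0. Let F : ℝ → ℝ be infinitely differentiable on a neighborhood of R. Suppose that for every integer l with 0 ≤ l ≤ m−1 both ((d/ds)^l (Q_m F))(R) = 0 and (𝒟_m^{∘l} F)(R) = 0, where 𝒟_m^{∘l} denotes the l-fold composition of 𝒟_m (with 𝒟_m^{∘0} F = F). Then F^{(k)}(R) = 0 for every integer k with 0 ≤ k ≤ 2m−1. -/

import Mathlib

/-- The second-order operator `𝒟_k f (s) = f''(s) + (n-1)·coth(s)·f'(s)
    - (k(k+n-2)/sinh²(s))·f(s)`. -/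
noncomputable def Dop (n k : ℤ) (f : ℝ → ℝ) : ℝ → ℝ := fun s =>
  deriv (deriv f) s + ((n : ℝ) - 1) * (Real.cosh s / Real.sinh s) * deriv f s
    - ((k : ℝ) * ((k : ℝ) + (n : ℝ) - 2) / (Real.sinh s) ^ 2) * f s

/-- The first-order operator `Γ_k f (s) = f'(s) + (n+k-2)·coth(s)·f(s)`. -/
noncomputable def Gop (n k : ℤ) (f : ℝ → ℝ) : ℝ → ℝ := fun s =>
  deriv f s + ((n : ℝ) + (k : ℝ) - 2) * (Real.cosh s / Real.sinh s) * f s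

/-- `Q_m = Γ_1 ∘ Γ_2 ∘ ⋯ ∘ Γ_m` (with `Γ_m` applied first). -/
noncomputable def Qop (n : ℤ) : ℕ → (ℝ → ℝ) → (ℝ → ℝ)
  | 0 => id
  | m + 1 => fun f => Qop n m (Gop n ((m : ℤ) + 1) f)


namespace LInd

open PowerSeries

/-! ### Algebraic part: formal power series -/

/-- Formal derivative. -/
noncomputable abbrev dd : Derivation ℝ ℝ⟦X⟧ ℝ⟦X⟧ := PowerSeries.derivative ℝ

/-- Formal `Γ_k`. -/
noncomputable def gam (n : ℤ) (c : ℝ⟦X⟧) (k : ℤ) (f : ℝ⟦X⟧) : ℝ⟦X⟧ :=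
  dd f + ((n + k - 2 : ℤ) : ℝ⟦X⟧) * c * f

/-- Formal `𝒟_k`. -/
noncomputable def dop (n : ℤ) (c u : ℝ⟦X⟧) (k : ℤ) (f : ℝ⟦X⟧) : ℝ⟦X⟧ :=
  dd (dd f) + ((n - 1 : ℤ) : ℝ⟦X⟧) * c * dd f - ((k * (k + n - 2) : ℤ) : ℝ⟦X⟧) * u ^ 2 * f

/-- Raising operator `d/ds - k coth`. -/
noncomputable def lop (c : ℝ⟦X⟧) (k : ℤ) : ℝ⟦X⟧ →ₗ[ℝ] ℝ⟦X⟧ :=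
  (dd : ℝ⟦X⟧ →ₗ[ℝ] ℝ⟦X⟧) - LinearMap.mulLeft ℝ ((k : ℝ⟦X⟧) * c)

lemma lop_apply (c : ℝ⟦X⟧) (k : ℤ) (f : ℝ⟦X⟧) : lop c k f = dd f - (k : ℝ⟦X⟧) * c * f := by
  simp [lop, mul_assoc]

/-- `L_{j+p-1} ∘ ⋯ ∘ L_j`. -/
noncomputable def wop (c : ℝ⟦X⟧) : ℕ → ℤ → (ℝ⟦X⟧ →ₗ[ℝ] ℝ⟦X⟧)
  | 0, _ => LinearMap.id
  | p + 1, j => (wop c p (j + 1)).comp (lop c j)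

/-- Formal `Q_m`. -/
noncomputable def qop (n : ℤ) (c : ℝ⟦X⟧) : ℕ → ℝ⟦X⟧ → ℝ⟦X⟧
  | 0 => id
  | m + 1 => fun f => qop n c m (gam n c ((m : ℤ) + 1) f)

section
variable {n : ℤ} {c u : ℝ⟦X⟧}

lemma lop_gam (hc : dd c = - u ^ 2) (hcu : u ^ 2 = c ^ 2 - 1) (k : ℤ) (f : ℝ⟦X⟧) :
    lop c k (gam n c (k + 1) f) =
      dop n c u (k + 1) f - ((k * (n + k - 1) : ℤ) : ℝ) • f := by
  rw [lop_apply, gam, dop]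
  simp only [map_add, Derivation.leibniz, Derivation.map_intCast, hc, smul_eq_mul, hcu,
    Int.cast_smul_eq_zsmul, zsmul_eq_mul]
  push_cast
  ring

lemma gam_dop (hc : dd c = - u ^ 2) (hu : dd u = - (c * u)) (hcu : u ^ 2 = c ^ 2 - 1)
    (k : ℤ) (f : ℝ⟦X⟧) :
    gam n c (k + 1) (dop n c u (k + 1) f) = dop n c u k (gam n c (k + 1) f) := by
  have hu2 : dd (u ^ 2) = - 2 * c * u ^ 2 := by
    rw [pow_two, Derivation.leibniz, hu]; simp only [smul_eq_mul]; ring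
  rw [gam, gam, dop, dop]
  simp only [map_add, map_sub, map_neg, Derivation.leibniz, Derivation.map_intCast, hc,
    smul_eq_mul, hu2, smul_zero, add_zero, mul_zero]
  push_cast
  rw [hcu]
  ring

lemma gam_dop_iter (hc : dd c = - u ^ 2) (hu : dd u = - (c * u)) (hcu : u ^ 2 = c ^ 2 - 1)
    (k : ℤ) (l : ℕ) (f : ℝ⟦X⟧) :
    gam n c (k + 1) ((dop n c u (k + 1))^[l] f) = (dop n c u k)^[l] (gam n c (k + 1) f) := by
  induction l generalizing f with
  | zero => rfl
  | succ l ih => rw [Function.iterate_succ_apply, ih, gam_dop hc hu hcu,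
      Function.iterate_succ_apply]

/-- The cone of positive combinations of `c^i u^b`. -/
inductive Pos (c u : ℝ⟦X⟧) : ℝ⟦X⟧ → Prop
  | mono (i b : ℕ) : Pos c u (c ^ i * u ^ b)
  | add {f g : ℝ⟦X⟧} : Pos c u f → Pos c u g → Pos c u (f + g)
  | smul {r : ℝ} {f : ℝ⟦X⟧} : 0 < r → Pos c u f → Pos c u (r • f)

lemma Pos.coeff_pos (hc0 : 0 < constantCoeff c) (hu0 : 0 < constantCoeff u) {f : ℝ⟦X⟧}
    (hf : Pos c u f) : 0 < constantCoeff f := by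
  induction hf with
  | mono i b => rw [map_mul, map_pow, map_pow]; positivity
  | add _ _ h1 h2 => rw [map_add]; positivity
  | smul hr _ h => rw [← coeff_zero_eq_constantCoeff_apply, map_smul, smul_eq_mul,
      coeff_zero_eq_constantCoeff_apply]; positivity

lemma Pos.lop (hc : dd c = - u ^ 2) (hu : dd u = - (c * u)) {k : ℤ} (hk : 1 ≤ k) {f : ℝ⟦X⟧}
    (hf : Pos c u f) : Pos c u (- lop c k f) := by
  induction hf with
  | mono i b =>
    have hb : 0 < ((b + k : ℤ) : ℝ) := by
      have : 0 < (b + k : ℤ) := by omega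
      exact_mod_cast this
    have hub : dd (u ^ b) = - (b : ℝ⟦X⟧) * c * u ^ b := by
      rw [Derivation.leibniz_pow, hu]
      rcases b with _ | b
      · simp
      · simp only [nsmul_eq_mul, smul_eq_mul, Nat.add_sub_cancel]; ring
    rcases i with _ | i
    · have := (Pos.mono (c := c) (u := u) 1 b).smul hb
      convert this using 1
      rw [lop_apply]
      simp only [Derivation.leibniz, hub, smul_eq_mul, Int.cast_smul_eq_zsmul, zsmul_eq_mul,
        pow_zero, Derivation.map_one_eq_zero]
      push_cast
      ring
    · have h1 := (Pos.mono (c := c) (u := u) (i + 2) b).smul hb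
      have hi : 0 < ((i + 1 : ℤ) : ℝ) := by
        have : 0 < (i + 1 : ℤ) := by omega
        exact_mod_cast this
      have h2 := (Pos.mono (c := c) (u := u) i (b + 2)).smul hi
      convert h1.add h2 using 1
      rw [lop_apply]
      simp only [Derivation.leibniz, hub, smul_eq_mul, Int.cast_smul_eq_zsmul, zsmul_eq_mul,
        Derivation.leibniz_pow, hc, nsmul_eq_mul, Nat.add_sub_cancel]
      push_cast
      ring
  | add _ _ h1 h2 => rw [map_add, neg_add]; exact h1.add h2
  | smul hr _ h => rw [map_smul, ← smul_neg]; exact h.smul hr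

lemma Pos.wop_ne (hc : dd c = - u ^ 2) (hu : dd u = - (c * u)) (hc0 : 0 < constantCoeff c)
    (hu0 : 0 < constantCoeff u) (p : ℕ) {j : ℤ} (hj : 1 ≤ j) {f : ℝ⟦X⟧} (hf : Pos c u f) :
    constantCoeff (wop c p j f) ≠ 0 := by
  induction p generalizing j f with
  | zero => exact (hf.coeff_pos hc0 hu0).ne'
  | succ p ih =>
    have := ih (j := j + 1) (by omega) (hf.lop hc hu hj)
    rw [map_neg, map_neg, neg_ne_zero] at this
    exact this

lemma dvd_dd {q : ℕ} {f : ℝ⟦X⟧} (h : X ^ (q + 1) ∣ f) : X ^ q ∣ dd f := by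
  rw [X_pow_dvd_iff] at h ⊢
  intro i hi
  rw [coeff_derivative, h (i + 1) (by omega), zero_mul]

lemma dvd_of_dd {q : ℕ} {f : ℝ⟦X⟧} (h0 : constantCoeff f = 0) (h : X ^ q ∣ dd f) :
    X ^ (q + 1) ∣ f := by
  rw [X_pow_dvd_iff] at h ⊢
  intro i hi
  rcases i with _ | i
  · simpa using h0
  · have := h i (by omega)
    rw [coeff_derivative] at this
    have h2 : (i : ℝ) + 1 ≠ 0 := by positivity
    simpa [h2] using this

lemma dvd_of_gam {k : ℤ} {q : ℕ} {f : ℝ⟦X⟧} (h0 : constantCoeff f = 0)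
    (h : X ^ q ∣ gam n c k f) : X ^ (q + 1) ∣ f := by
  suffices ∀ i ≤ q + 1, X ^ i ∣ f from this _ le_rfl
  intro i
  induction i with
  | zero => intro _; simp
  | succ i ih =>
    intro hi
    refine dvd_of_dd h0 ?_
    have h1 : dd f = gam n c k f - ((n + k - 2 : ℤ) : ℝ⟦X⟧) * c * f := by rw [gam]; ring
    rw [h1]
    exact dvd_sub ((pow_dvd_pow X (by omega)).trans h) (Dvd.dvd.mul_left (ih (by omega)) _)

lemma dvd_wop (p q : ℕ) (j : ℤ) {f : ℝ⟦X⟧} (h : X ^ (q + p) ∣ f) : X ^ q ∣ wop c p j f := by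
  induction p generalizing j f with
  | zero => exact h
  | succ p ih =>
    refine ih (j + 1) ?_
    rw [lop_apply]
    exact dvd_sub (dvd_dd h) (Dvd.dvd.mul_left ((pow_dvd_pow X (by omega)).trans h) _)

theorem main (hn : 2 ≤ n) (hc : dd c = - u ^ 2) (hu : dd u = - (c * u))
    (hcu : u ^ 2 = c ^ 2 - 1) (hc0 : 0 < constantCoeff c)
    (hu0 : 0 < constantCoeff u) (j : ℕ) : ∀ (p : ℕ) (f : ℝ⟦X⟧), X ^ (p + j) ∣ qop n c j f →
    (∀ l < j, constantCoeff (wop c p j ((dop n c u j)^[l] f)) = 0) → X ^ (p + 2 * j) ∣ f := by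
  induction j with
  | zero => intro p f h _; simpa [qop] using h
  | succ j ih =>
    intro p f h1 h2
    push_cast at h2
    have h3 : X ^ ((p + 1) + 2 * j) ∣ gam n c (j + 1) f := by
      apply ih
      · have : p + 1 + j = p + (j + 1) := by omega
        rw [this]; exact h1
      · intro l hl
        rw [← gam_dop_iter hc hu hcu]
        change constantCoeff (wop c p (j + 1) (lop c j _)) = 0
        rw [lop_gam hc hcu, map_sub, map_sub, map_smul, ← Function.iterate_succ_apply' (dop n c u (j + 1)),
          h2 _ (by omega), ← coeff_zero_eq_constantCoeff_apply, map_smul,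
          coeff_zero_eq_constantCoeff_apply, h2 _ (by omega)]
        simp
    obtain ⟨a, ha⟩ : ∃ a : ℕ, (a : ℤ) = n + (j + 1) - 2 :=
      ⟨(n + (j + 1) - 2).toNat, Int.toNat_of_nonneg (by omega)⟩
    have hg : gam n c (j + 1) (u ^ a) = 0 := by
      rw [gam, ← ha, Derivation.leibniz_pow, hu]
      rcases a with _ | a
      · simp
      · simp only [nsmul_eq_mul, smul_eq_mul, Nat.add_sub_cancel]; push_cast; ring
    have hpos : Pos c u (u ^ a) := by simpa using Pos.mono (c := c) (u := u) 0 a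
    have hg0 := hpos.coeff_pos hc0 hu0
    set r : ℝ := constantCoeff f / constantCoeff (u ^ a) with hr
    have csm : ∀ (r : ℝ) (f : ℝ⟦X⟧), constantCoeff (r • f) = r * constantCoeff f := by
      intro r f
      rw [← coeff_zero_eq_constantCoeff_apply, map_smul, smul_eq_mul,
        coeff_zero_eq_constantCoeff_apply]
    have hH : X ^ ((p + 1 + 2 * j) + 1) ∣ f - r • u ^ a := by
      apply dvd_of_gam (n := n) (c := c) (k := j + 1)
      · rw [map_sub, csm, hr, div_mul_cancel₀ _ hg0.ne', sub_self]
      · have : gam n c (j + 1) (f - r • u ^ a)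
            = gam n c (j + 1) f - r • gam n c (j + 1) (u ^ a) := by
          simp only [gam, map_sub, Derivation.map_smul, smul_add, mul_sub, mul_smul_comm]
          abel
        rw [this, hg, smul_zero, sub_zero]
        exact h3
    have hW : X ^ 1 ∣ wop c p (j + 1) (f - r • u ^ a) :=
      dvd_wop _ _ _ ((pow_dvd_pow X (by omega)).trans hH)
    rw [pow_one, X_dvd_iff, map_sub, map_sub, map_smul, csm] at hW
    have h20 := h2 0 (by omega)
    simp only [Function.iterate_zero, id] at h20
    have hr0 : r = 0 := by
      have := hpos.wop_ne hc hu hc0 hu0 p (j := j + 1) (by omega)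
      rw [h20, zero_sub, neg_eq_zero] at hW
      exact (mul_eq_zero.1 hW).resolve_right this
    rw [hr0, zero_smul, sub_zero] at hH
    convert hH using 2
    ring

end

/-! ### Taylor series -/

/-- Taylor series at `R`. -/
noncomputable def jet (R : ℝ) (f : ℝ → ℝ) : ℝ⟦X⟧ :=
  PowerSeries.mk fun k => iteratedDeriv k f R / (k.factorial : ℝ)

/-- Smooth at `R`. -/
abbrev Sm (R : ℝ) (f : ℝ → ℝ) : Prop := ContDiffAt ℝ (⊤ : ℕ∞) f R

section
variable {R : ℝ} {f g : ℝ → ℝ}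

lemma Sm.nat (hf : Sm R f) (k : ℕ) : ContDiffAt ℝ k f R :=
  hf.of_le (by exact_mod_cast le_top)

lemma Sm.deriv (hf : Sm R f) : Sm R (deriv f) :=
  ContDiffAt.derivWithin hf (by simp)

lemma jet_zero_coeff : constantCoeff (jet R f) = f R := by
  rw [← coeff_zero_eq_constantCoeff_apply, jet, coeff_mk]; simp

lemma jet_deriv : jet R (deriv f) = dd (jet R f) := by
  ext k
  rw [coeff_derivative, jet, jet, coeff_mk, coeff_mk, iteratedDeriv_succ', Nat.factorial_succ]
  push_cast
  field_simp

lemma jet_add (hf : Sm R f) (hg : Sm R g) : jet R (f + g) = jet R f + jet R g := by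
  ext k
  simp only [jet, coeff_mk, map_add]
  rw [iteratedDeriv_add (hf.nat k) (hg.nat k), add_div]

lemma jet_sub (hf : Sm R f) (hg : Sm R g) : jet R (f - g) = jet R f - jet R g := by
  ext k
  simp only [jet, coeff_mk, map_sub]
  rw [iteratedDeriv_sub (hf.nat k) (hg.nat k), sub_div]

lemma jet_mul (hf : Sm R f) (hg : Sm R g) : jet R (f * g) = jet R f * jet R g := by
  ext k
  rw [coeff_mul, Finset.Nat.sum_antidiagonal_eq_sum_range_succ_mk]
  simp only [jet, coeff_mk]
  rw [iteratedDeriv_mul (hf.nat k) (hg.nat k), Finset.sum_div]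
  refine Finset.sum_congr rfl fun i hi => ?_
  have hi' : i ≤ k := by simpa [Nat.lt_succ_iff] using hi
  rw [Nat.cast_choose ℝ hi']
  have h1 : (k.factorial : ℝ) ≠ 0 := by positivity
  have h2 : (i.factorial : ℝ) ≠ 0 := by positivity
  have h3 : ((k - i).factorial : ℝ) ≠ 0 := by positivity
  field_simp

lemma jet_const (r : ℝ) : jet R (fun _ => r) = C r := by
  ext k
  rw [jet, coeff_mk, iteratedDeriv_const, coeff_C]
  split_ifs with h <;> simp [h]

lemma jet_congr (h : f =ᶠ[nhds R] g) : jet R f = jet R g := by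
  ext k
  rw [jet, jet, coeff_mk, coeff_mk, h.iteratedDeriv_eq]

lemma Sm.mul' (hf : Sm R f) (hg : Sm R g) : Sm R (f * g) := ContDiffAt.mul hf hg
lemma Sm.add' (hf : Sm R f) (hg : Sm R g) : Sm R (f + g) := ContDiffAt.add hf hg
lemma Sm.sub' (hf : Sm R f) (hg : Sm R g) : Sm R (f - g) := ContDiffAt.sub hf hg

lemma sm_const (r : ℝ) : Sm R (fun _ => r) := contDiffAt_const
lemma sm_sinh : Sm R Real.sinh := Real.contDiff_sinh.contDiffAt
lemma sm_cosh : Sm R Real.cosh := Real.contDiff_cosh.contDiffAt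
lemma sm_inv (hR : 0 < R) : Sm R (fun s => (Real.sinh s)⁻¹) :=
  sm_sinh.inv (Real.sinh_pos_iff.2 hR).ne'

/-- Taylor series of `1 / sinh`. -/
noncomputable def uu (R : ℝ) : ℝ⟦X⟧ := jet R (fun s => (Real.sinh s)⁻¹)
/-- Taylor series of `coth`. -/
noncomputable def cc (R : ℝ) : ℝ⟦X⟧ := jet R (Real.cosh * fun s => (Real.sinh s)⁻¹)

lemma cc_eq (hR : 0 < R) : cc R = jet R Real.cosh * uu R := jet_mul sm_cosh (sm_inv hR)

lemma us (hR : 0 < R) : uu R * jet R Real.sinh = 1 := by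
  rw [uu, ← jet_mul (sm_inv hR) sm_sinh, ← map_one (C (R := ℝ)), ← jet_const (R := R)]
  apply jet_congr
  filter_upwards [lt_mem_nhds hR] with s hs
  have := (Real.sinh_pos_iff.2 hs).ne'
  simp [this]

lemma dS : dd (jet R Real.sinh) = jet R Real.cosh := by rw [← jet_deriv, Real.deriv_sinh]
lemma dC : dd (jet R Real.cosh) = jet R Real.sinh := by rw [← jet_deriv, Real.deriv_cosh]

lemma CS : jet R Real.cosh * jet R Real.cosh = jet R Real.sinh * jet R Real.sinh + 1 := by
  rw [← jet_mul sm_cosh sm_cosh, ← jet_mul sm_sinh sm_sinh, ← map_one (C (R := ℝ)),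
    ← jet_const (R := R), ← jet_add (sm_sinh.mul' sm_sinh) (sm_const _)]
  congr 1
  funext s
  have := Real.cosh_sq s
  simp only [Pi.mul_apply, Pi.add_apply]
  nlinarith

lemma du (hR : 0 < R) : dd (uu R) = - (cc R * uu R) := by
  have h := congrArg dd (us hR)
  rw [Derivation.leibniz, dS, Derivation.map_one_eq_zero, smul_eq_mul, smul_eq_mul] at h
  rw [cc_eq hR]
  have h1 := us hR
  linear_combination (uu R) * h - dd (uu R) * h1

lemma cu (hR : 0 < R) : uu R ^ 2 = cc R ^ 2 - 1 := by
  rw [cc_eq hR]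
  have h1 := us hR
  linear_combination (-(uu R) ^ 2) * CS (R := R) - (uu R * jet R Real.sinh + 1) * h1

lemma dc (hR : 0 < R) : dd (cc R) = - uu R ^ 2 := by
  have h1 := us hR
  have h2 := cu hR
  have h : dd (cc R) = jet R Real.cosh * dd (uu R) + uu R * jet R Real.sinh := by
    rw [cc_eq hR, Derivation.leibniz, dC, smul_eq_mul, smul_eq_mul]
  rw [h, du hR]
  have h3 := cc_eq hR
  linear_combination h1 + h2 + cc R * h3

lemma C_int (k : ℤ) : C (k : ℝ) = (k : ℝ⟦X⟧) := map_intCast _ k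

lemma sm_coth (hR : 0 < R) : Sm R (Real.cosh * fun s => (Real.sinh s)⁻¹) :=
  sm_cosh.mul' (sm_inv hR)

lemma Gop_eq (n k : ℤ) (f : ℝ → ℝ) : Gop n k f = deriv f +
    (fun _ => ((n + k - 2 : ℤ) : ℝ)) * (Real.cosh * fun s => (Real.sinh s)⁻¹) * f := by
  funext s
  simp only [Gop, Pi.add_apply, Pi.mul_apply]
  push_cast
  ring

lemma sm_Gop (hR : 0 < R) (n k : ℤ) (hf : Sm R f) : Sm R (Gop n k f) := by
  rw [Gop_eq]
  exact hf.deriv.add' (((sm_const _).mul' (sm_coth hR)).mul' hf)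

lemma jet_Gop (hR : 0 < R) (n k : ℤ) (hf : Sm R f) :
    jet R (Gop n k f) = gam n (cc R) k (jet R f) := by
  rw [Gop_eq, jet_add hf.deriv (((sm_const _).mul' (sm_coth hR)).mul' hf),
    jet_mul ((sm_const _).mul' (sm_coth hR)) hf, jet_mul (sm_const _) (sm_coth hR), jet_deriv,
    jet_const, C_int]
  rfl

lemma Dop_eq (n k : ℤ) (f : ℝ → ℝ) : Dop n k f = deriv (deriv f) +
    (fun _ => ((n - 1 : ℤ) : ℝ)) * (Real.cosh * fun s => (Real.sinh s)⁻¹) * deriv f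
    - (fun _ => ((k * (k + n - 2) : ℤ) : ℝ)) *
      ((fun s => (Real.sinh s)⁻¹) * (fun s => (Real.sinh s)⁻¹)) * f := by
  funext s
  simp only [Dop, Pi.add_apply, Pi.sub_apply, Pi.mul_apply]
  push_cast
  rw [div_eq_mul_inv, div_eq_mul_inv, pow_two, mul_inv]

lemma sm_Dop (hR : 0 < R) (n k : ℤ) (hf : Sm R f) : Sm R (Dop n k f) := by
  rw [Dop_eq]
  exact (hf.deriv.deriv.add' (((sm_const _).mul' (sm_coth hR)).mul' hf.deriv)).sub'
    (((sm_const _).mul' ((sm_inv hR).mul' (sm_inv hR))).mul' hf)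

lemma jet_Dop (hR : 0 < R) (n k : ℤ) (hf : Sm R f) :
    jet R (Dop n k f) = dop n (cc R) (uu R) k (jet R f) := by
  have a1 := ((sm_const (R := R) ((n - 1 : ℤ) : ℝ)).mul' (sm_coth hR))
  have a2 := (sm_const (R := R) ((k * (k + n - 2) : ℤ) : ℝ)).mul' ((sm_inv hR).mul' (sm_inv hR))
  rw [Dop_eq, jet_sub (hf.deriv.deriv.add' (a1.mul' hf.deriv)) (a2.mul' hf),
    jet_add hf.deriv.deriv (a1.mul' hf.deriv), jet_mul a1 hf.deriv, jet_mul a2 hf,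
    jet_mul (sm_const _) (sm_coth hR), jet_mul (sm_const _) ((sm_inv hR).mul' (sm_inv hR)),
    jet_mul (sm_inv hR) (sm_inv hR), jet_deriv, jet_deriv, jet_const, jet_const, C_int, C_int,
    dop, pow_two]
  rfl

lemma jet_Qop (hR : 0 < R) (n : ℤ) (m : ℕ) (hf : Sm R f) :
    jet R (Qop n m f) = qop n (cc R) m (jet R f) := by
  induction m generalizing f with
  | zero => rfl
  | succ m ih =>
    rw [Qop, qop, ih (sm_Gop hR _ _ hf), jet_Gop hR _ _ hf]

lemma jet_Dop_iter (hR : 0 < R) (n k : ℤ) (l : ℕ) (hf : Sm R f) :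
    jet R ((Dop n k)^[l] f) = (dop n (cc R) (uu R) k)^[l] (jet R f) := by
  induction l generalizing f with
  | zero => rfl
  | succ l ih =>
    rw [Function.iterate_succ_apply, Function.iterate_succ_apply, ih (sm_Dop hR _ _ hf),
      jet_Dop hR _ _ hf]

lemma jet_dvd (q : ℕ) : X ^ q ∣ jet R f ↔ ∀ i < q, iteratedDeriv i f R = 0 := by
  rw [X_pow_dvd_iff]
  refine forall₂_congr fun i _ => ?_
  have : (i.factorial : ℝ) ≠ 0 := by positivity
  rw [jet, coeff_mk, div_eq_zero_iff, or_iff_left this]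

end

end LInd

/-- Lemma `L:Ind`: if `(d/ds)^l (Q_m F) (R) = 0` and `𝒟_m^l F (R) = 0` for
    `l = 0, …, m-1`, then `F^{(k)}(R) = 0` for `k = 0, …, 2m-1`. -/
theorem stmt_5 (n : ℤ) (hn : 2 ≤ n) (m : ℕ) (hm : 1 ≤ m) (R : ℝ) (hR : 0 < R)
    (F : ℝ → ℝ) (hF : ContDiffAt ℝ (⊤ : ℕ∞) F R)
    (h1 : ∀ l : ℕ, l < m → iteratedDeriv l (Qop n m F) R = 0)
    (h2 : ∀ l : ℕ, l < m → (Dop n (m : ℤ))^[l] F R = 0) :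
    ∀ k : ℕ, k < 2 * m → iteratedDeriv k F R = 0 := by
  have hu0 : 0 < PowerSeries.constantCoeff (LInd.uu R) := by
    rw [LInd.uu, LInd.jet_zero_coeff]
    exact inv_pos.2 (Real.sinh_pos_iff.2 hR)
  have hc0 : 0 < PowerSeries.constantCoeff (LInd.cc R) := by
    rw [LInd.cc, LInd.jet_zero_coeff]
    exact mul_pos (Real.cosh_pos R) (inv_pos.2 (Real.sinh_pos_iff.2 hR))
  have key := LInd.main hn (LInd.dc hR) (LInd.du hR) (LInd.cu hR) hc0 hu0 m 0 (LInd.jet R F)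
    (by
      rw [zero_add, ← LInd.jet_Qop hR n m hF, LInd.jet_dvd]
      exact h1)
    (by
      intro l hl
      rw [← LInd.jet_Dop_iter hR n m l hF]
      change PowerSeries.constantCoeff (LInd.jet R _) = 0
      rw [LInd.jet_zero_coeff]
      exact h2 l hl)
  rw [zero_add, LInd.jet_dvd] at key
  exact key
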